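/- arXiv:math/0501498 — 2 statements merged into one kernel-verified Lean document; each statement's English description precedes it below -/
import Mathlib

section
/- (Lascoux's lemma, part 1.) Let n, p ≥ 1. In the polynomial ring ℤ[x_1,…,x_n,y_1,…,y_p] one has the identity ∏_{a=1}^{n} ∏_{b=1}^{p} (1 + x_a + y_b) = ∑_{λ ⊆ (p^n)} ∑_{μ ⊆ λ} E_{λ/μ}(n) · s_μ(x_1,…,x_n) · s_{∁λ~}(y_1,…,y_p), where λ runs over all partitions with λ_1 ≤ p and l(λ) ≤ n, μ runs over partitions contained in λ, λ~ is the conjugate of λ, and ∁λ~ is the complement of λ~ in the block (n^p), i.e. (∁λ~)_b = n − (λ~)_{p+1−b} for 1 ≤ b ≤ p. -/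
/-!
STATEMENT 1 (Lascoux's lemma, part 1):
`∏_{a=1}^{n} ∏_{b=1}^{p} (1 + x_a + y_b)
   = ∑_{λ ⊆ (p^n)} ∑_{μ ⊆ λ} E_{λ/μ}(n) · s_μ(x) · s_{∁λ~}(y)`
in `ℤ[x_1,…,x_n,y_1,…,y_p]`.  Partitions are encoded 0-based as functions `ℕ → ℕ`.
The Schur polynomials `Sx` (in the x-variables) and `Sy` (in the y-variables) are
characterized by the bialternant formula (which determines them uniquely).
-/

open Finset MvPolynomial

/-- `E_{λ/μ}(n) = det[ C(λ_k + n − k, μ_l + n − l) ]_{1≤k,l≤n}` (indices written 0-based). -/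
def Edet (n : ℕ) (lam mu : ℕ → ℕ) : ℤ :=
  (Matrix.of fun k l : Fin n =>
    ((lam k + (n - 1 - (k : ℕ))).choose (mu l + (n - 1 - (l : ℕ))) : ℤ)).det

/-- The conjugate partition, 0-based: `conjP lam m = (λ~)_{m+1} = #{k : λ_k ≥ m+1}`. -/
noncomputable def conjP (lam : ℕ → ℕ) (m : ℕ) : ℕ := Nat.card {k : ℕ // m + 1 ≤ lam k}

/-- Extension of a bounded tuple to a function `ℕ → ℕ` (zero beyond the box). -/
def extF {n : ℕ} {m : Fin n → ℕ} (f : (k : Fin n) → Fin (m k + 1)) : ℕ → ℕ :=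
  fun k => if h : k < n then (f ⟨k, h⟩ : ℕ) else 0

/-- The complement `∁λ~` of the conjugate of `λ` inside the block `(n^p)`:
`(∁λ~)_b = n − (λ~)_{p+1−b}` for `1 ≤ b ≤ p` (written 0-based). -/
noncomputable def complConj (n p : ℕ) (lam : ℕ → ℕ) : ℕ → ℕ :=
  fun b => if b < p then n - conjP lam (p - 1 - b) else 0


theorem cauchyBinet_aux {Λ α γ R : Type*} [Fintype Λ] [Fintype α] [DecidableEq α] [Fintype γ]
    [DecidableEq γ] [CommRing R] (G : Λ → α → γ) (hG : ∀ l, Function.Injective (G l))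
    (hinj : ∀ l l' (t t' : Equiv.Perm α), (∀ a, G l (t a) = G l' (t' a)) → l = l' ∧ t = t')
    (hsurj : ∀ f : α → γ, Function.Injective f → ∃ l, ∃ t : Equiv.Perm α, ∀ a, f a = G l (t a))
    (A : Matrix α γ R) (B : Matrix γ α R) :
    (A * B).det = ∑ l, (A.submatrix id (G l)).det * (B.submatrix (G l) id).det := by
  classical
  have h1 : (A * B).det = ∑ f : α → γ, (∏ i, B (f i) i) * (A.submatrix id f).det := by
    simp only [Matrix.det_apply', Matrix.mul_apply, prod_univ_sum, mul_sum, Fintype.piFinset_univ]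
    rw [Finset.sum_comm]
    refine sum_congr rfl fun f _ => sum_congr rfl fun s _ => ?_
    simp only [prod_mul_distrib, Matrix.submatrix_apply, id]
    ring
  have h2 : (A * B).det = ∑ f : α → γ with Function.Injective f,
      (∏ i, B (f i) i) * (A.submatrix id f).det := by
    rw [h1]
    refine (sum_subset (filter_subset _ _) fun f _ hf => ?_).symm
    have hf : ¬ Function.Injective f := fun h => hf (by simpa using h)
    unfold Function.Injective at hf
    push Not at hf
    obtain ⟨i, j, hij, hne⟩ := hf
    rw [Matrix.det_zero_of_column_eq hne (fun k => by simp [hij]), mul_zero]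
  have h3 : ∑ f : α → γ with Function.Injective f, (∏ i, B (f i) i) * (A.submatrix id f).det
      = ∑ q : Λ × Equiv.Perm α, (∏ i, B (G q.1 (q.2 i)) i) *
          (A.submatrix id (fun a => G q.1 (q.2 a))).det := by
    symm
    refine sum_bij (fun q _ => fun a => G q.1 (q.2 a)) ?_ ?_ ?_ ?_
    · intro q _
      simp only [mem_filter_univ]
      exact (hG q.1).comp q.2.injective
    · intro q _ q' _ h
      obtain ⟨h1, h2⟩ := hinj q.1 q'.1 q.2 q'.2 (fun a => congrFun h a)
      exact Prod.ext h1 h2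
    · intro f hf
      simp only [mem_filter_univ] at hf
      obtain ⟨l, t, h⟩ := hsurj f hf
      exact ⟨(l, t), mem_univ _, (funext h).symm⟩
    · intro _ _; rfl
  rw [h2, h3, Fintype.sum_prod_type]
  refine sum_congr rfl fun l _ => ?_
  rw [Matrix.det_apply' (B.submatrix (G l) id), mul_sum]
  refine sum_congr rfl fun t _ => ?_
  have := Matrix.det_permute' t (A.submatrix id (G l))
  rw [Matrix.submatrix_submatrix] at this
  simp only [Matrix.submatrix_apply, id]
  change _ * (A.submatrix (id ∘ id) (G l ∘ t)).det = _
  rw [this]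
  ring

theorem laplace_aux {Λ α β R : Type*} [Fintype Λ] [Fintype α] [DecidableEq α] [Fintype β]
    [DecidableEq β] [CommRing R] (S : Λ → Equiv.Perm (α ⊕ β))
    (hinj : ∀ l l' (t t' : Equiv.Perm α), (∀ a, S l (.inl (t a)) = S l' (.inl (t' a))) →
      l = l' ∧ t = t')
    (hsurj : ∀ f : α → α ⊕ β, Function.Injective f →
      ∃ l, ∃ t : Equiv.Perm α, ∀ a, f a = S l (.inl (t a)))
    (M : Matrix (α ⊕ β) (α ⊕ β) R) :
    M.det = ∑ l, ((Equiv.Perm.sign (S l) : ℤ) : R) *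
      (Matrix.of fun a b : α => M (.inl a) (S l (.inl b))).det *
      (Matrix.of fun a b : β => M (.inr a) (S l (.inr b))).det := by
  classical
  have key : Function.Bijective (fun q : Λ × (Equiv.Perm α × Equiv.Perm β) =>
      S q.1 * Equiv.Perm.sumCongrHom α β q.2) := by
    constructor
    · rintro ⟨l, t, r⟩ ⟨l', t', r'⟩ h
      obtain ⟨rfl, rfl⟩ := hinj l l' t t' (fun a => by
        simpa using congrArg (fun s : Equiv.Perm (α ⊕ β) => s (.inl a)) h)
      have := Equiv.Perm.sumCongrHom_injective (mul_left_cancel h)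
      exact Prod.ext rfl this
    · intro s
      obtain ⟨l, t, h⟩ := hsurj (fun a => s (.inl a)) (s.injective.comp Sum.inl_injective)
      have : (S l)⁻¹ * s ∈ (Equiv.Perm.sumCongrHom α β).range := by
        apply Equiv.Perm.mem_sumCongrHom_range_of_perm_mapsTo_inl
        rintro _ ⟨a, rfl⟩
        exact ⟨t a, by simp [h]⟩
      obtain ⟨q, hq⟩ := this
      exact ⟨(l, q), by simp [hq]⟩
  rw [← Matrix.det_transpose, Matrix.det_apply']
  rw [← Fintype.sum_bijective _ key _ _ (fun _ => rfl), Fintype.sum_prod_type]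
  refine sum_congr rfl fun l _ => ?_
  rw [Fintype.sum_prod_type, ← Matrix.det_transpose (Matrix.of fun a b : α => _),
    ← Matrix.det_transpose (Matrix.of fun a b : β => _), Matrix.det_apply', Matrix.det_apply',
    mul_assoc, sum_mul_sum, mul_sum]
  refine sum_congr rfl fun t _ => ?_
  rw [mul_sum]
  refine sum_congr rfl fun r _ => ?_
  simp [Equiv.Perm.sign_mul, Equiv.Perm.sign_sumCongr]
  ring

abbrev PP (n p : ℕ) := {lam : Fin n → Fin (p + 1) // ∀ a b : Fin n, a ≤ b → lam b ≤ lam a}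

theorem lt_conjP {n : ℕ} {L : ℕ → ℕ} (hL : Antitone L) (h0 : ∀ k, n ≤ k → L k = 0) (k m : ℕ) :
    k < conjP L m ↔ m + 1 ≤ L k := by
  classical
  have hex : ∃ c, L c < m + 1 := ⟨n, by simp [h0]⟩
  have hc : ∀ k, m + 1 ≤ L k ↔ k < Nat.find hex := by
    intro k
    constructor
    · intro h
      by_contra hk
      have := hL (not_lt.1 hk)
      have := Nat.find_spec hex
      omega
    · intro h
      exact not_lt.1 (Nat.find_min hex h)
  have : conjP L m = Nat.find hex := by
    unfold conjP
    rw [Nat.card_congr (Equiv.subtypeEquivRight hc)]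
    change Nat.card (Set.Iio (Nat.find hex)) = _
    simp
  rw [this, hc]

theorem conjP_le {n : ℕ} {L : ℕ → ℕ} (hL : Antitone L) (h0 : ∀ k, n ≤ k → L k = 0) (m : ℕ) :
    conjP L m ≤ n := by
  by_contra h
  have := (lt_conjP hL h0 n m).1 (not_le.1 h)
  simp [h0] at this

theorem conjP_anti {n : ℕ} {L : ℕ → ℕ} (hL : Antitone L) (h0 : ∀ k, n ≤ k → L k = 0) :
    Antitone (conjP L) := by
  intro m m' h
  by_contra hh
  have h1 := (lt_conjP hL h0 _ m').1 (not_le.1 hh)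
  have h2 := (lt_conjP hL h0 (conjP L m) m).not.1 (lt_irrefl _)
  omega

theorem extF_anti {n : ℕ} {m : Fin n → ℕ} (f : (k : Fin n) → Fin (m k + 1))
    (h : ∀ a b : Fin n, a ≤ b → (f b : ℕ) ≤ f a) : Antitone (extF f) := by
  intro a b hab
  unfold extF
  split_ifs with h1 h2
  · exact h _ _ hab
  · omega
  · omega
  · omega

theorem extF_zero {n : ℕ} {m : Fin n → ℕ} (f : (k : Fin n) → Fin (m k + 1)) :
    ∀ k, n ≤ k → extF f k = 0 := by
  intro k hk
  simp [extF, hk]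

theorem extF_val {n : ℕ} {m : Fin n → ℕ} (f : (k : Fin n) → Fin (m k + 1)) (k : Fin n) :
    extF f k = f k := by
  simp [extF]

def LL {n p : ℕ} (l : PP n p) : ℕ → ℕ := extF (m := fun _ => p) l.1

theorem LL_anti {n p : ℕ} (l : PP n p) : Antitone (LL l) := extF_anti _ l.2
theorem LL_zero {n p : ℕ} (l : PP n p) : ∀ k, n ≤ k → LL l k = 0 := extF_zero _
theorem LL_val {n p : ℕ} (l : PP n p) (k : Fin n) : LL l k = l.1 k := extF_val _ k
theorem LL_le {n p : ℕ} (l : PP n p) (k : Fin n) : LL l k ≤ p := by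
  rw [LL_val]; omega

def GG {n p : ℕ} (l : PP n p) (k : Fin n) : Fin (n + p) := ⟨p - LL l k + k, by omega⟩

theorem GG_mono {n p : ℕ} (l : PP n p) : StrictMono (GG l) := by
  intro a b h
  have := LL_anti l (show (a : ℕ) ≤ b from h.le)
  have h' : (a : ℕ) < b := h
  change p - LL l a + a < p - LL l b + b
  omega

theorem sm_gap {n N : ℕ} {f : Fin n → Fin N} (hf : StrictMono f) (a : Fin n) :
    ∀ b : ℕ, ∀ hb : b < n, (a : ℕ) ≤ b → (f a : ℕ) + (b - a) ≤ f ⟨b, hb⟩ := by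
  intro b
  induction b with
  | zero =>
    intro hb h
    have : a = ⟨0, hb⟩ := Fin.ext (by simpa using h)
    simp [this]
  | succ b ih =>
    intro hb h
    rcases h.lt_or_eq with h | h
    · have h1 := ih (by omega) (by omega)
      have h2 : (f ⟨b, by omega⟩ : ℕ) < f ⟨b + 1, hb⟩ := hf (by simp)
      omega
    · have : a = ⟨b + 1, hb⟩ := Fin.ext h
      simp [this]

theorem GG_surj {n p : ℕ} (f : Fin n → Fin (n + p)) (hf : Function.Injective f) :
    ∃ l : PP n p, ∃ t : Equiv.Perm (Fin n), ∀ a, f a = GG l (t a) := by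
  have hg : StrictMono (f ∘ Tuple.sort f) :=
    (Tuple.monotone_sort f).strictMono_of_injective (hf.comp (Tuple.sort f).injective)
  set g := f ∘ Tuple.sort f with hgd
  have h1 : ∀ k : Fin n, (k : ℕ) ≤ g k := by
    intro k
    have := sm_gap hg (⟨0, lt_of_le_of_lt (Nat.zero_le _) k.2⟩ : Fin n) k k.2 (by simp)
    simp at this
    omega
  have h2 : ∀ k : Fin n, (g k : ℕ) ≤ p + k := by
    intro k
    have := sm_gap hg k (n - 1) (by have := k.2; omega) (by omega)
    have hk := k.2
    have h3 := (g ⟨n - 1, by omega⟩).2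
    omega
  refine ⟨⟨fun k => ⟨p + k - g k, by have := h1 k; omega⟩, ?_⟩, (Tuple.sort f)⁻¹, ?_⟩
  · intro a b hab
    have := sm_gap hg a b b.2 hab
    have hab' : (a : ℕ) ≤ b := hab
    have := h2 a
    have := h2 b
    simp only [Fin.mk_le_mk]
    simp at *
    omega
  · intro a
    have : f a = g ((Tuple.sort f)⁻¹ a) := by simp [hgd]
    rw [this]
    apply Fin.ext
    simp only [GG, LL_val]
    have := h1 ((Tuple.sort f)⁻¹ a)
    have := h2 ((Tuple.sort f)⁻¹ a)
    omega

theorem GG_inj {n p : ℕ} (l l' : PP n p) (t t' : Equiv.Perm (Fin n))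
    (h : ∀ a, GG l (t a) = GG l' (t' a)) : l = l' ∧ t = t' := by
  have h1 : GG l = GG l' := by
    rw [← StrictMono.range_inj (GG_mono l) (GG_mono l')]
    have : GG l ∘ t = GG l' ∘ t' := funext h
    rw [← t.surjective.range_comp, this, t'.surjective.range_comp]
  have h2 : l = l' := by
    apply Subtype.ext
    funext k
    have := congrArg Fin.val (congrFun h1 k)
    have h3 := LL_le l k
    have h4 := LL_le l' k
    simp only [GG, LL_val] at this h3 h4
    apply Fin.ext
    omega
  refine ⟨h2, Equiv.ext fun a => ?_⟩
  apply (GG_mono l).injective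
  rw [h a, h1]

noncomputable def HH {n p : ℕ} (l : PP n p) (b : Fin p) : Fin (n + p) :=
  ⟨conjP (LL l) (p - 1 - b) + b, by
    have := conjP_le (LL_anti l) (LL_zero l) (p - 1 - b); omega⟩

theorem HH_mono {n p : ℕ} (l : PP n p) : StrictMono (HH l) := by
  intro a b h
  have h' : (a : ℕ) < b := h
  have := conjP_anti (LL_anti l) (LL_zero l) (show p - 1 - (b : ℕ) ≤ p - 1 - a by omega)
  change conjP (LL l) (p - 1 - a) + a < conjP (LL l) (p - 1 - b) + b
  omega

theorem HH_lt_GG {n p : ℕ} (l : PP n p) (k : Fin n) (b : Fin p) :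
    (conjP (LL l) (p - 1 - b) ≤ k → HH l b < GG l k) ∧
    ((k : ℕ) < conjP (LL l) (p - 1 - b) → GG l k < HH l b) := by
  have h := lt_conjP (LL_anti l) (LL_zero l) k (p - 1 - b)
  have := LL_le l k
  constructor
  · intro h1
    have := h.not.1 (not_lt.2 h1)
    change conjP (LL l) (p - 1 - b) + b < p - LL l k + k
    omega
  · intro h1
    have := h.1 h1
    change p - LL l k + k < conjP (LL l) (p - 1 - b) + b
    omega

theorem SS_inj {n p : ℕ} (l : PP n p) : Function.Injective (Sum.elim (GG l) (HH l)) := by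
  apply Function.Injective.sumElim (GG_mono l).injective (HH_mono l).injective
  intro a b h
  rcases le_or_gt (conjP (LL l) (p - 1 - b)) a with h1 | h1
  · exact absurd h ((HH_lt_GG l a b).1 h1).ne'
  · exact absurd h ((HH_lt_GG l a b).2 h1).ne

noncomputable def SS {n p : ℕ} (l : PP n p) : Equiv.Perm (Fin n ⊕ Fin p) :=
  (Equiv.ofBijective (Sum.elim (GG l) (HH l))
    ((Fintype.bijective_iff_injective_and_card _).2 ⟨SS_inj l, by simp⟩)).trans
    finSumFinEquiv.symm

theorem SS_inl {n p : ℕ} (l : PP n p) (k : Fin n) : finSumFinEquiv (SS l (.inl k)) = GG l k := by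
  simp [SS]
theorem SS_inr {n p : ℕ} (l : PP n p) (k : Fin p) : finSumFinEquiv (SS l (.inr k)) = HH l k := by
  simp [SS]

theorem SS_sign {n p : ℕ} (l : PP n p) :
    (Equiv.Perm.sign (SS l)) = ∏ b : Fin p, (-1 : ℤˣ) ^ (n - conjP (LL l) (p - 1 - b)) := by
  have h := Equiv.Perm.sign_permCongr finSumFinEquiv (SS l)
  rw [← h, Equiv.Perm.sign_eq_prod_prod_Iio]
  set s := finSumFinEquiv.permCongr (SS l) with hs
  have e1 : ∀ k : Fin n, s (Fin.castAdd p k) = GG l k := by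
    intro k
    rw [← SS_inl]; simp [hs]
  have e2 : ∀ k : Fin p, s (Fin.natAdd n k) = HH l k := by
    intro k
    rw [← SS_inr]; simp [hs]
  have : ∀ j, ∏ i ∈ Finset.Iio j, (if s i < s j then (1 : ℤˣ) else -1)
      = ∏ i, if i < j then (if s i < s j then (1 : ℤˣ) else -1) else 1 := by
    intro j
    rw [← Finset.prod_filter]
    congr 1
    ext; simp
  simp_rw [this]
  rw [Fin.prod_univ_add]
  have z1 : ∀ k : Fin n, (∏ i, if i < Fin.castAdd p k then
      (if s i < s (Fin.castAdd p k) then (1 : ℤˣ) else -1) else 1) = 1 := by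
    intro k
    rw [Fin.prod_univ_add]
    simp only [e1, e2]
    rw [Finset.prod_eq_one, Finset.prod_eq_one, one_mul]
    · intro b _
      rw [if_neg]
      simp [Fin.lt_def]; omega
    · intro b _
      split_ifs with h1 h2
      · rfl
      · exact absurd (GG_mono l (show b < k from h1)) h2
      · rfl
  have z2 : ∀ b : Fin p, (∏ i, if i < Fin.natAdd n b then
      (if s i < s (Fin.natAdd n b) then (1 : ℤˣ) else -1) else 1)
      = (-1 : ℤˣ) ^ (n - conjP (LL l) (p - 1 - b)) := by
    intro b
    rw [Fin.prod_univ_add]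
    simp only [e1, e2]
    rw [Finset.prod_eq_one (s := (Finset.univ : Finset (Fin p)))]
    · rw [mul_one]
      have : ∀ k : Fin n, (if Fin.castAdd p k < Fin.natAdd n b then
          (if GG l k < HH l b then (1 : ℤˣ) else -1) else 1)
          = if (k : ℕ) < conjP (LL l) (p - 1 - b) then (1 : ℤˣ) else -1 := by
        intro k
        rw [if_pos (by simp [Fin.lt_def]; omega)]
        rcases le_or_gt (conjP (LL l) (p - 1 - b)) k with h1 | h1
        · rw [if_neg ((HH_lt_GG l k b).1 h1).not_gt, if_neg (not_lt.2 h1)]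
        · rw [if_pos ((HH_lt_GG l k b).2 h1), if_pos h1]
      simp_rw [this]
      have hc := conjP_le (LL_anti l) (LL_zero l) (p - 1 - b)
      generalize conjP (LL l) (p - 1 - b) = c at hc
      obtain ⟨d, rfl⟩ := Nat.exists_eq_add_of_le hc
      rw [Fin.prod_univ_add]
      simp
    · intro b' _
      split_ifs with h1 h2
      · rfl
      · exact absurd (HH_mono l (show b' < b from Nat.lt_of_add_lt_add_left h1)) h2
      · rfl
  simp_rw [z1, z2]
  simp

theorem vd {n : ℕ} {R : Type*} [CommRing R] (v : Fin n → R) :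
    (Matrix.of fun a b : Fin n => v a ^ (n - 1 - (b : ℕ))).det
      = ∏ i, ∏ j, if i < j then v i - v j else 1 := by
  have h := Matrix.det_projVandermonde (fun _ => 1) v
  have e : (Matrix.of fun a b : Fin n => v a ^ (n - 1 - (b : ℕ)))
      = Matrix.projVandermonde (fun _ => 1) v := by
    ext a b
    simp only [Matrix.of_apply, Matrix.projVandermonde_apply, one_pow, one_mul, Fin.val_rev]
    congr 1
    omega
  rw [e, h]
  refine prod_congr rfl fun i _ => ?_
  rw [← Finset.prod_filter]
  simp only [one_mul]
  congr 1
  ext; simp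

theorem vd_filter {n : ℕ} {R : Type*} [CommRing R] (v : Fin n → R) :
    (∏ q ∈ Finset.univ.filter (fun q : Fin n × Fin n => q.1 < q.2), (v q.1 - v q.2))
      = ∏ i, ∏ j, if i < j then v i - v j else 1 := by
  rw [Finset.prod_filter, Fintype.prod_prod_type]

theorem Edet_zero {n : ℕ} {L M : ℕ → ℕ} (hL : Antitone L) (hM : Antitone M) (i : Fin n)
    (hi : L i < M i) : Edet n L M = 0 := by
  unfold Edet
  rw [Matrix.det_apply']
  refine sum_eq_zero fun s _ => ?_
  have : ∃ l : Fin n, l ≤ i ∧ i ≤ s l := by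
    by_contra hc
    push Not at hc
    have h1 : (Finset.Iic i).card ≤ (Finset.Iio i).card :=
      Finset.card_le_card_of_injOn s (fun l hl => by
        simpa using hc l (by simpa using hl)) s.injective.injOn
    simp at h1
  obtain ⟨l, h1, h2⟩ := this
  rw [prod_eq_zero (mem_univ l), mul_zero]
  simp only [Matrix.of_apply]
  have h1' : (l : ℕ) ≤ i := h1
  have h2' : (i : ℕ) ≤ s l := h2
  have := hL h2'
  have := hM h1'
  rw [Nat.choose_eq_zero_of_lt (by omega)]
  simp

theorem binom_exp {n p : ℕ} {R : Type*} [CommRing R] (x : Fin n → R) (l : PP n p) :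
    (Matrix.of fun a b : Fin n => (1 + x a) ^ (LL l b + (n - 1 - (b : ℕ)))).det
      = ∑ m : PP n p, ((Edet n (LL l) (LL m) : ℤ) : R) *
        (Matrix.of fun a b : Fin n => x a ^ (LL m b + (n - 1 - (b : ℕ)))).det := by
  have h := cauchyBinet_aux (R := R) (GG (n := n) (p := p)) (fun l => (GG_mono l).injective)
    GG_inj GG_surj (Matrix.of fun (a : Fin n) (j : Fin (n + p)) => x a ^ (n + p - 1 - (j : ℕ)))
    (Matrix.of fun (j : Fin (n + p)) (b : Fin n) =>
      (((LL l b + (n - 1 - (b : ℕ))).choose (n + p - 1 - (j : ℕ)) : ℕ) : R))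
  have hG : ∀ (m : PP n p) (k : Fin n), n + p - 1 - (GG m k : ℕ) = LL m k + (n - 1 - (k : ℕ)) := by
    intro m k
    have := LL_le m k
    simp only [GG]
    omega
  have e : (Matrix.of fun a b : Fin n => (1 + x a) ^ (LL l b + (n - 1 - (b : ℕ))))
      = (Matrix.of fun (a : Fin n) (j : Fin (n + p)) => x a ^ (n + p - 1 - (j : ℕ))) *
    (Matrix.of fun (j : Fin (n + p)) (b : Fin n) =>
      (((LL l b + (n - 1 - (b : ℕ))).choose (n + p - 1 - (j : ℕ)) : ℕ) : R)) := by
    ext a b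
    simp only [Matrix.mul_apply, Matrix.of_apply]
    have hb := LL_le l b
    generalize hE : LL l b + (n - 1 - (b : ℕ)) = E
    have hE' : E + 1 ≤ n + p := by omega
    rw [Fin.sum_univ_eq_sum_range (fun j => x a ^ (n + p - 1 - j) *
      ((E.choose (n + p - 1 - j) : ℕ) : R)) (n + p)]
    rw [Finset.sum_range_reflect (fun j => x a ^ j * ((E.choose j : ℕ) : R)) (n + p)]
    rw [add_comm, add_pow]
    simp only [one_pow, mul_one]
    refine sum_subset (by simpa using hE') fun j _ hj => ?_
    simp only [mem_range, not_lt] at hj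
    rw [Nat.choose_eq_zero_of_lt (by omega)]
    simp
  rw [e, h]
  refine sum_congr rfl fun m _ => ?_
  rw [mul_comm]
  congr 1
  · rw [← Matrix.det_transpose, Edet, ← eq_intCast (Int.castRingHom R), RingHom.map_det]
    congr 1
    ext a b
    simp [hG]
  · congr 1
    ext a b
    simp [hG]

theorem det_neg_pow {p : ℕ} {R : Type*} [CommRing R] (y : Fin p → R) (e : Fin p → ℕ) :
    (Matrix.of fun a b : Fin p => (-y a) ^ e b).det
      = (∏ b, (-1 : R) ^ e b) * (Matrix.of fun a b : Fin p => y a ^ e b).det := by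
  rw [← Matrix.det_mul_row]
  congr 1
  ext a b
  simp [neg_pow (y a)]

theorem complConj_anti {n p : ℕ} (l : PP n p) : Antitone (complConj n p (LL l)) := by
  intro a b hab
  unfold complConj
  split_ifs with h1 h2
  · have := conjP_anti (LL_anti l) (LL_zero l) (show p - 1 - b ≤ p - 1 - a by omega)
    omega
  · omega
  · omega
  · omega

theorem complConj_zero {n p : ℕ} (L : ℕ → ℕ) : ∀ k, p ≤ k → complConj n p L k = 0 := by
  intro k hk
  simp [complConj, hk]

theorem main_id {n p : ℕ} {R : Type*} [CommRing R] (x : Fin n → R) (y : Fin p → R) :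
    (∏ i, ∏ j, if i < j then x i - x j else 1) * (∏ i, ∏ j, if i < j then y i - y j else 1)
      * (∏ a, ∏ b, (1 + x a + y b))
    = ∑ l : PP n p, (∑ m : PP n p, ((Edet n (LL l) (LL m) : ℤ) : R) *
        (Matrix.of fun a b : Fin n => x a ^ (LL m b + (n - 1 - (b : ℕ)))).det) *
        (Matrix.of fun a b : Fin p => y a ^ (complConj n p (LL l) b + (p - 1 - (b : ℕ)))).det := by
  set z : Fin n → R := fun a => 1 + x a with hz
  set w : Fin p → R := fun a => - y a with hw
  set c : R := ∏ b : Fin p, (-1 : R) ^ (p - 1 - (b : ℕ)) with hc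
  have hcc : c * c = 1 := by
    rw [hc, ← prod_mul_distrib]
    refine prod_eq_one fun b _ => ?_
    rw [← mul_pow]; simp
  have hVw : (∏ i, ∏ j, if i < j then w i - w j else 1)
      = c * (∏ i, ∏ j, if i < j then y i - y j else 1) := by
    rw [← vd, ← vd, hc, hw]
    exact det_neg_pow y (fun b => p - 1 - (b : ℕ))
  have hVz : (∏ i, ∏ j, if i < j then z i - z j else 1)
      = (∏ i, ∏ j, if i < j then x i - x j else 1) := by
    simp [hz]
  set v : Fin (n + p) → R := Fin.append z w with hv
  have hV : (∏ i, ∏ j, if i < j then v i - v j else 1)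
      = (∏ i, ∏ j, if i < j then z i - z j else 1) * (∏ a, ∏ b, (1 + x a + y b)) *
        (∏ i, ∏ j, if i < j then w i - w j else 1) := by
    rw [Fin.prod_univ_add]
    simp only [Fin.prod_univ_add, hv, Fin.append_left, Fin.append_right]
    have l1 : ∀ (a b : Fin n), (Fin.castAdd p a < Fin.castAdd p b) = (a < b) := fun _ _ => rfl
    have l2 : ∀ (a : Fin n) (b : Fin p), (Fin.castAdd p a < Fin.natAdd n b) = True := by
      intro a b
      simp only [Fin.lt_def, Fin.val_castAdd, Fin.val_natAdd, eq_iff_iff, iff_true]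
      omega
    have l3 : ∀ (a : Fin n) (b : Fin p), (Fin.natAdd n b < Fin.castAdd p a) = False := by
      intro a b
      simp only [Fin.lt_def, Fin.val_castAdd, Fin.val_natAdd, eq_iff_iff, iff_false]
      omega
    have l4 : ∀ (a b : Fin p), (Fin.natAdd n a < Fin.natAdd n b) = (a < b) := by
      intro a b
      simp only [Fin.lt_def, Fin.val_natAdd, eq_iff_iff]
      omega
    simp only [l1, l2, l3, l4, if_true, if_false, prod_const_one, one_mul, prod_mul_distrib]
    simp only [hz, hw, sub_neg_eq_add]
  have hlap : (∏ i, ∏ j, if i < j then v i - v j else 1) = ∑ l : PP n p,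
      (∏ b : Fin p, (-1 : R) ^ (complConj n p (LL l) b)) *
      (Matrix.of fun a b : Fin n => z a ^ (LL l b + (n - 1 - (b : ℕ)))).det *
      (Matrix.of fun a b : Fin p => w a ^ (complConj n p (LL l) b + (p - 1 - (b : ℕ)))).det := by
    rw [← vd, ← Matrix.det_submatrix_equiv_self finSumFinEquiv]
    rw [laplace_aux (SS (n := n) (p := p))]
    · refine sum_congr rfl fun l _ => ?_
      congr 1
      · congr 1
        · rw [SS_sign]
          push_cast
          refine prod_congr rfl fun b _ => ?_
          simp [complConj]
        · congr 1
          ext a b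
          simp only [Matrix.of_apply, Matrix.submatrix_apply, SS_inl, finSumFinEquiv_apply_left, hv,
            Fin.append_left]
          congr 1
          have := LL_le l b
          simp only [GG]
          omega
      · congr 1
        ext a b
        simp only [Matrix.of_apply, Matrix.submatrix_apply, SS_inr, finSumFinEquiv_apply_right, hv,
            Fin.append_right]
        congr 1
        have := conjP_le (LL_anti l) (LL_zero l) (p - 1 - b)
        simp only [HH, complConj, b.2, if_true]
        omega
    · intro l l' t t' h
      apply GG_inj
      intro a
      rw [← SS_inl, ← SS_inl, h]
    · intro f hf
      obtain ⟨l, t, h⟩ := GG_surj (fun a => finSumFinEquiv (f a)) (finSumFinEquiv.injective.comp hf)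
      refine ⟨l, t, fun a => finSumFinEquiv.injective ?_⟩
      rw [SS_inl, ← h]
  rw [hlap, hVz, hVw] at hV
  have : ∀ A B D : R, A * D * B = c * (A * B * (c * D)) := by
    intro A B D
    linear_combination (- A * B * D) * hcc
  rw [this, ← hV, mul_sum]
  refine sum_congr rfl fun l _ => ?_
  rw [← binom_exp, det_neg_pow y (fun b => complConj n p (LL l) b + (p - 1 - (b : ℕ)))]
  simp only [pow_add, prod_mul_distrib, ← hc]
  set d : R := ∏ b : Fin p, (-1 : R) ^ (complConj n p (LL l) b) with hd
  have hdd : d * d = 1 := by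
    rw [hd, ← prod_mul_distrib]
    refine prod_eq_one fun b _ => ?_
    rw [← mul_pow]; simp
  simp only [hz]
  have : ∀ A D : R, c * (d * A * (d * c * D)) = A * D := by
    intro A D
    linear_combination (A * D) * (c * c * hdd + hcc)
  exact this _ _

theorem lascoux_inner_sum {n p : ℕ} {R : Type*} [CommRing R] (l : PP n p) (g : (ℕ → ℕ) → R)
    (hg : ∀ m : PP n p, (∃ i : Fin n, LL l i < LL m i) → g (LL m) = 0) :
    (∑ mu : (k : Fin n) → Fin ((l.1 k : ℕ) + 1),
      if (∀ a b : Fin n, a ≤ b → ((mu b : ℕ) ≤ (mu a : ℕ))) then g (extF mu) else 0)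
    = ∑ m : PP n p, g (LL m) := by
  classical
  rw [← Finset.sum_filter]
  rw [Finset.sum_subtype (p := fun mu : (k : Fin n) → Fin ((l.1 k : ℕ) + 1) =>
    ∀ a b : Fin n, a ≤ b → ((mu b : ℕ) ≤ (mu a : ℕ))) (F := inferInstance) _ (by simp)]
  refine Finset.sum_of_injOn (fun mu => (⟨fun k => ⟨mu.1 k, by
    have := (mu.1 k).2; have := (l.1 k).2; omega⟩, fun a b h => mu.2 a b h⟩ : PP n p)) ?_ ?_ ?_ ?_
  · intro mu _ mu' _ h
    apply Subtype.ext
    funext k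
    have := congrArg (fun m : PP n p => (m.1 k : ℕ)) h
    exact Fin.ext this
  · intro _ _; simp
  · intro m _ hm
    apply hg
    by_contra hc
    push Not at hc
    simp only [LL_val] at hc
    apply hm
    refine ⟨⟨fun k => ⟨m.1 k, by have := hc k; omega⟩, fun a b h => m.2 a b h⟩, by simp, ?_⟩
    rfl
  · intro mu _
    rfl

theorem lascoux_part1 (n p : ℕ) (hn : 1 ≤ n) (hp : 1 ≤ p)
    (Sx : (ℕ → ℕ) → MvPolynomial (Fin n) ℤ)
    (Sy : (ℕ → ℕ) → MvPolynomial (Fin p) ℤ)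
    -- bialternant characterization of the Schur polynomials in the x-variables:
    (hSx : ∀ lam : ℕ → ℕ, Antitone lam → (∀ k, n ≤ k → lam k = 0) →
      Sx lam * ∏ q ∈ Finset.univ.filter (fun q : Fin n × Fin n => q.1 < q.2),
          (X q.1 - X q.2)
        = (Matrix.of fun a b : Fin n =>
            (X a : MvPolynomial (Fin n) ℤ) ^ (lam (b : ℕ) + (n - 1 - (b : ℕ)))).det)
    -- bialternant characterization of the Schur polynomials in the y-variables:
    (hSy : ∀ lam : ℕ → ℕ, Antitone lam → (∀ k, p ≤ k → lam k = 0) →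
      Sy lam * ∏ q ∈ Finset.univ.filter (fun q : Fin p × Fin p => q.1 < q.2),
          (X q.1 - X q.2)
        = (Matrix.of fun a b : Fin p =>
            (X a : MvPolynomial (Fin p) ℤ) ^ (lam (b : ℕ) + (p - 1 - (b : ℕ)))).det) :
    (∏ a : Fin n, ∏ b : Fin p,
        (1 + X (Sum.inl a) + X (Sum.inr b) : MvPolynomial (Fin n ⊕ Fin p) ℤ))
      = ∑ lam : Fin n → Fin (p + 1),
          if (∀ a b : Fin n, a ≤ b → lam b ≤ lam a) then
            ∑ mu : (k : Fin n) → Fin ((lam k : ℕ) + 1),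
              if (∀ a b : Fin n, a ≤ b → ((mu b : ℕ) ≤ (mu a : ℕ))) then
                C (Edet n (extF (fun k => lam k)) (extF mu))
                  * rename Sum.inl (Sx (extF mu))
                  * rename Sum.inr (Sy (complConj n p (extF (fun k => lam k))))
              else 0
          else 0 := by
  classical
  set R := MvPolynomial (Fin n ⊕ Fin p) ℤ
  have hx : ∀ m : PP n p, rename Sum.inl (Sx (LL m)) *
      (∏ i : Fin n, ∏ j : Fin n, if i < j then (X (Sum.inl i) - X (Sum.inl j) : R) else 1)
      = (Matrix.of fun a b : Fin n =>
        (X (Sum.inl a) : R) ^ (LL m b + (n - 1 - (b : ℕ)))).det := by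
    intro m
    have h := congrArg (rename (Sum.inl : Fin n → Fin n ⊕ Fin p)) (hSx (LL m) (LL_anti m) (LL_zero m))
    rw [vd_filter, map_mul, AlgHom.map_det] at h
    simp only [map_prod, apply_ite (rename (Sum.inl : Fin n → Fin n ⊕ Fin p)), map_sub, map_one,
      rename_X] at h
    rw [h]
    congr 1
    ext a b : 2
    simp
  have hy : ∀ l : PP n p, rename Sum.inr (Sy (complConj n p (LL l))) *
      (∏ i : Fin p, ∏ j : Fin p, if i < j then (X (Sum.inr i) - X (Sum.inr j) : R) else 1)
      = (Matrix.of fun a b : Fin p =>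
        (X (Sum.inr a) : R) ^ (complConj n p (LL l) b + (p - 1 - (b : ℕ)))).det := by
    intro l
    have h := congrArg (rename (Sum.inr : Fin p → Fin n ⊕ Fin p))
      (hSy (complConj n p (LL l)) (complConj_anti l) (complConj_zero _))
    rw [vd_filter, map_mul, AlgHom.map_det] at h
    simp only [map_prod, apply_ite (rename (Sum.inr : Fin p → Fin n ⊕ Fin p)), map_sub, map_one,
      rename_X] at h
    rw [h]
    congr 1
    ext a b : 2
    simp
  have hVx : (∏ i : Fin n, ∏ j : Fin n,
      if i < j then (X (Sum.inl i) - X (Sum.inl j) : R) else 1) ≠ 0 := by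
    refine prod_ne_zero_iff.2 fun i _ => prod_ne_zero_iff.2 fun j _ => ?_
    split_ifs with h
    · rw [sub_ne_zero]
      intro h'
      exact h.ne (Sum.inl_injective (X_injective h'))
    · exact one_ne_zero
  have hVy : (∏ i : Fin p, ∏ j : Fin p,
      if i < j then (X (Sum.inr i) - X (Sum.inr j) : R) else 1) ≠ 0 := by
    refine prod_ne_zero_iff.2 fun i _ => prod_ne_zero_iff.2 fun j _ => ?_
    split_ifs with h
    · rw [sub_ne_zero]
      intro h'
      exact h.ne (Sum.inr_injective (X_injective h'))
    · exact one_ne_zero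
  have hm := main_id (n := n) (p := p) (fun a => (X (Sum.inl a) : R)) (fun b => X (Sum.inr b))
  apply mul_left_cancel₀ (mul_ne_zero hVx hVy)
  rw [hm, ← Finset.sum_filter]
  rw [Finset.sum_subtype (p := fun lam : Fin n → Fin (p + 1) =>
    ∀ a b : Fin n, a ≤ b → lam b ≤ lam a) _ (by simp)]
  rw [mul_sum]
  refine sum_congr rfl fun l _ => ?_
  have hin := lascoux_inner_sum l (fun M => (C (Edet n (LL l) M) : R) * rename Sum.inl (Sx M)
    * rename Sum.inr (Sy (complConj n p (LL l)))) (by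
      rintro m ⟨i, hi⟩
      simp only [Edet_zero (LL_anti l) (LL_anti m) i hi, map_zero, zero_mul])
  refine Eq.trans ?_ (congrArg _ hin.symm)
  rw [← hy, sum_mul, mul_sum]
  refine sum_congr rfl fun m _ => ?_
  rw [← hx, ← eq_intCast (C : ℤ →+* R)]
  ring
end

section
/- (Factorization formula for supersymmetric Schur polynomials.) Let n, p ≥ 1 and let α, β be partitions with α_1 ≤ n and l(β) ≤ p. Let λ be the partition with λ_l = n + β_l for 1 ≤ l ≤ p and λ_{p+l} = α_l for l ≥ 1. Then in ℤ[x_1,…,x_n,y_1,…,y_p]: s_λ(B−A) = (−1)^{|α|} · ∏_{a=1}^{n} ∏_{b=1}^{p} (y_b − x_a) · s_{α~}(x_1,…,x_n) · s_β(y_1,…,y_p), where s_λ(B−A) := det[ c_{(λ~)_k − k + l} ]_{1≤k,l≤λ_1} and c_d := ∑_{a=0}^{d} (−1)^a h_a(x_1,…,x_n) e_{d−a}(y_1,…,y_p) (with c_0 = 1 and c_d = 0 for d < 0). -/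
/-!
STATEMENT 3 (factorization formula for supersymmetric Schur polynomials):
for partitions `α` (with `α_1 ≤ n`) and `β` (with `l(β) ≤ p`), and
`λ = (n^p + β, α)`, one has, in `ℤ[x_1,…,x_n,y_1,…,y_p]`,
`s_λ(B−A) = (−1)^{|α|} · ∏_{a,b} (y_b − x_a) · s_{α~}(x) · s_β(y)`.
Here `s_λ(B−A) = det[ c_{(λ~)_k − k + l} ]_{1≤k,l≤λ_1}` with
`c_d = ∑_{a=0}^d (−1)^a h_a(x) e_{d−a}(y)`.  Partitions are encoded 0-based;
the Schur polynomials are characterized by the bialternant formula.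
-/

open Finset MvPolynomial

/-- The complete homogeneous symmetric polynomial `h_a(x_1,…,x_n)` in the x-variables. -/
noncomputable def hsymX (n p a : ℕ) : MvPolynomial (Fin n ⊕ Fin p) ℤ :=
  ∑ f ∈ Finset.Nat.antidiagonalTuple n a, ∏ k, X (Sum.inl k) ^ f k

/-- The elementary symmetric polynomial `e_b(y_1,…,y_p)` in the y-variables. -/
noncomputable def esymY (n p b : ℕ) : MvPolynomial (Fin n ⊕ Fin p) ℤ :=
  ∑ t ∈ Finset.powersetCard b (Finset.univ : Finset (Fin p)), ∏ i ∈ t, X (Sum.inr i)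

/-- `c_d = ∑_{a=0}^{d} (−1)^a h_a(x) e_{d−a}(y)`, the Chern class of `B^p − A^n`. -/
noncomputable def cpoly (n p d : ℕ) : MvPolynomial (Fin n ⊕ Fin p) ℤ :=
  ∑ a ∈ Finset.range (d + 1), (-1) ^ a * hsymX n p a * esymY n p (d - a)

/-- `c_d` for integer `d`, with `c_d = 0` for `d < 0`. -/
noncomputable def cInt (n p : ℕ) (d : ℤ) : MvPolynomial (Fin n ⊕ Fin p) ℤ :=
  if 0 ≤ d then cpoly n p d.toNat else 0

/-- The supersymmetric Schur polynomial
`s_λ(B−A) = det[ c_{(λ~)_k − k + l} ]_{1≤k,l≤λ_1}` (indices written 0-based). -/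
noncomputable def superSchur (n p : ℕ) (lam : ℕ → ℕ) : MvPolynomial (Fin n ⊕ Fin p) ℤ :=
  (Matrix.of fun k l : Fin (lam 0) =>
    cInt n p ((conjP lam (k : ℕ) : ℤ) - (k : ℕ) + (l : ℕ))).det

namespace FF

variable {R : Type*} [CommRing R]

/-- Elementary symmetric function of a family. -/
def es {p : ℕ} (y : Fin p → R) (b : ℕ) : R :=
  ∑ t ∈ Finset.powersetCard b (Finset.univ : Finset (Fin p)), ∏ i ∈ t, y i

/-- integer-indexed coefficient -/
noncomputable def zc (f : PowerSeries R) (d : ℤ) : R :=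
  if 0 ≤ d then PowerSeries.coeff d.toNat f else 0

noncomputable def lin {p : ℕ} (y : Fin p → R) : PowerSeries R :=
  ∏ b, (1 + PowerSeries.C (y b) * PowerSeries.X)

noncomputable def geo (z : R) : PowerSeries R := PowerSeries.mk fun k => z ^ k

lemma zc_nat (f : PowerSeries R) (d : ℕ) : zc f d = PowerSeries.coeff d f := by simp [zc]

lemma zc_neg (f : PowerSeries R) (d : ℤ) (h : d < 0) : zc f d = 0 := by simp [zc, h]

lemma zc_mul (f g : PowerSeries R) (K : ℕ) (hg : ∀ k, K ≤ k → PowerSeries.coeff k g = 0) (d : ℤ) :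
    zc (f * g) d = ∑ j ∈ range K, zc f (d - j) * PowerSeries.coeff j g := by
  by_cases hd : 0 ≤ d
  · lift d to ℕ using hd
    rw [zc_nat, mul_comm f g, PowerSeries.coeff_mul,
      Finset.Nat.sum_antidiagonal_eq_sum_range_succ
        (fun i j => PowerSeries.coeff i g * PowerSeries.coeff j f)]
    have h1 : ∑ j ∈ range K, zc f ((d : ℤ) - j) * PowerSeries.coeff j g
        = ∑ j ∈ range (max K (d + 1)), zc f ((d : ℤ) - j) * PowerSeries.coeff j g := by
      apply Finset.sum_subset
      · intro j; simp; omega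
      · intro j _ hj
        rw [hg j (by simpa using hj), mul_zero]
    rw [h1]
    have h2 : ∑ j ∈ range (d + 1), zc f ((d : ℤ) - j) * PowerSeries.coeff j g
        = ∑ j ∈ range (max K (d + 1)), zc f ((d : ℤ) - j) * PowerSeries.coeff j g := by
      apply Finset.sum_subset
      · intro j; simp; omega
      · intro j _ hj
        rw [zc_neg, zero_mul]
        simp at hj; omega
    rw [← h2]
    apply Finset.sum_congr rfl
    intro j hj
    have : (d : ℤ) - j = ((d - j : ℕ) : ℤ) := by simp at hj; omega
    rw [this, zc_nat, mul_comm]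
  · rw [zc_neg _ _ (by omega), Finset.sum_eq_zero]
    intro j _
    rw [zc_neg _ _ (by omega), zero_mul]

lemma coeff_lin_gen {ι : Type*} (s : Finset ι) (y : ι → R) (d : ℕ) :
    PowerSeries.coeff d (∏ b ∈ s, (1 + PowerSeries.C (y b) * PowerSeries.X))
      = ∑ t ∈ Finset.powersetCard d s, ∏ i ∈ t, y i := by
  classical
  rw [Finset.prod_one_add, map_sum, Finset.powersetCard_eq_filter, Finset.sum_filter]
  apply Finset.sum_congr rfl
  intro t _
  rw [Finset.prod_mul_distrib, Finset.prod_const, ← map_prod, PowerSeries.coeff_C_mul,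
    PowerSeries.coeff_X_pow]
  by_cases h : d = #t <;> simp [h, eq_comm]

lemma coeff_lin {p : ℕ} (y : Fin p → R) (d : ℕ) : PowerSeries.coeff d (lin y) = es y d :=
  coeff_lin_gen _ _ _

lemma coeff_lin_gen_zero {ι : Type*} (s : Finset ι) (y : ι → R) (d : ℕ) (h : #s < d) :
    PowerSeries.coeff d (∏ b ∈ s, (1 + PowerSeries.C (y b) * PowerSeries.X)) = 0 := by
  rw [coeff_lin_gen, Finset.powersetCard_eq_empty.2 h, Finset.sum_empty]

lemma coeff_lin_zero {p : ℕ} (y : Fin p → R) (d : ℕ) (h : p < d) :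
    PowerSeries.coeff d (lin y) = 0 := coeff_lin_gen_zero _ _ _ (by simpa using h)

lemma geo_mul (z : R) : geo (-z) * (1 + PowerSeries.C z * PowerSeries.X) = 1 := by
  ext d
  rw [mul_add, mul_one, mul_comm (PowerSeries.C z), ← mul_assoc]
  cases d with
  | zero => simp [geo]
  | succ d =>
    simp only [map_add, PowerSeries.coeff_mul_C, PowerSeries.coeff_succ_mul_X]
    simp [geo, PowerSeries.coeff_one, pow_succ]

lemma eval_prod {p : ℕ} (y : Fin p → R) (z : R) :
    ∑ j ∈ range (p + 1), z ^ (p - j) * es y j = ∏ b, (y b + z) := by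
  classical
  rw [Finset.prod_add, Finset.sum_powerset, Finset.card_univ, Fintype.card_fin]
  apply Finset.sum_congr rfl
  intro j _
  rw [es, Finset.mul_sum]
  apply Finset.sum_congr rfl
  intro t ht
  rw [Finset.prod_const, Finset.card_sdiff_of_subset (Finset.subset_univ _),
    (Finset.mem_powersetCard.1 ht).2, Finset.card_univ, Fintype.card_fin, mul_comm]

lemma es_zero {p : ℕ} (y : Fin p → R) : es y 0 = 1 := by simp [es]

lemma es_big {p : ℕ} (y : Fin p → R) (d : ℕ) (h : p < d) : es y d = 0 := by
  rw [← coeff_lin]; exact coeff_lin_zero y d h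

lemma det_unitri {m : ℕ} (M : Matrix (Fin m) (Fin m) R) (h : ∀ i j, j < i → M i j = 0)
    (h1 : ∀ i, M i i = 1) : M.det = 1 := by
  rw [Matrix.det_of_isUpperTriangular]
  · simp [h1]
  · intro i j hij
    exact h i j hij


lemma lemA0 {n p : ℕ} (x : Fin n → R) (y : Fin p → R) (H : PowerSeries R)
    (hH : H * lin x = 1) (nu : Fin n → ℕ) :
    (Matrix.of fun k l : Fin n => zc (lin y * H) ((p + nu k : ℕ) - (k : ℕ) + (l : ℕ))).det
     * (Matrix.of fun l a : Fin n => PowerSeries.coeff (n - 1 - (l : ℕ))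
        (∏ b ∈ univ.erase a, (1 + PowerSeries.C (x b) * PowerSeries.X))).det
     = (∏ a, ∏ b, (y b - x a))
       * (Matrix.of fun k a : Fin n => (- x a) ^ (nu k + (n - 1 - (k : ℕ)))).det := by
  rw [← Matrix.det_mul, ← Matrix.det_mul_row]
  congr 1
  ext k a
  rw [Matrix.mul_apply]
  simp only [Matrix.of_apply]
  set G := ∏ b ∈ univ.erase a, (1 + PowerSeries.C (x b) * PowerSeries.X) with hG
  have hG1 : H * G = geo (- x a) := by
    have h1 : (1 + PowerSeries.C (x a) * PowerSeries.X) * G = lin x :=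
      Finset.mul_prod_erase univ (fun b => 1 + PowerSeries.C (x b) * PowerSeries.X)
        (Finset.mem_univ a)
    calc H * G = H * G * (geo (-x a) * (1 + PowerSeries.C (x a) * PowerSeries.X)) := by
          rw [geo_mul, mul_one]
      _ = H * lin x * geo (-x a) := by rw [← h1]; ring
      _ = _ := by rw [hH, one_mul]
  have hG0 : ∀ k, n ≤ k → PowerSeries.coeff k G = 0 := by
    intro k hk
    apply coeff_lin_gen_zero
    rw [Finset.card_erase_of_mem (Finset.mem_univ _), Finset.card_univ, Fintype.card_fin]
    have := a.2
    omega
  have hk := k.2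
  set d : ℕ := p + (nu k + (n - 1 - (k : ℕ))) with hd
  have key : zc (lin y * H * G) d = ∑ j ∈ range n, zc (lin y * H) (d - j) * PowerSeries.coeff j G :=
    zc_mul _ _ _ hG0 _
  have key2 : zc (lin y * H * G) d = (- x a) ^ (nu k + (n - 1 - (k : ℕ))) * ∏ b, (y b - x a) := by
    rw [mul_assoc, hG1, mul_comm, zc_mul _ _ (p + 1) (fun k hk => coeff_lin_zero y k hk)]
    simp_rw [sub_eq_add_neg]
    rw [← eval_prod, Finset.mul_sum]
    apply Finset.sum_congr rfl
    intro j hj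
    have hj' : j ≤ p := by simp at hj; omega
    have : (d : ℤ) + -(j : ℤ) = ((nu k + (n - 1 - (k : ℕ)) + (p - j) : ℕ) : ℤ) := by omega
    rw [this, zc_nat, coeff_lin, geo, PowerSeries.coeff_mk, pow_add, mul_assoc]
  rw [mul_comm _ ((- x a) ^ _), ← key2, key, ← Finset.sum_range_reflect,
    ← Fin.sum_univ_eq_sum_range
      (fun j => zc (lin y * H) (d - (n - 1 - j : ℕ)) * PowerSeries.coeff (n - 1 - j) G)]
  apply Finset.sum_congr rfl
  intro l _
  have hl := l.2
  congr 2
  omega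

lemma sign_det {n : ℕ} (x : Fin n → R) (e : Fin n → ℕ) :
    (Matrix.of fun k a : Fin n => (- x a) ^ e k).det
     = (∏ k, (-1) ^ e k) * (Matrix.of fun a k : Fin n => x a ^ e k).det := by
  rw [← Matrix.det_transpose (Matrix.of fun a k : Fin n => x a ^ e k), ← Matrix.det_mul_column]
  congr 1
  ext k a
  simp [Matrix.of_apply, neg_pow (x a)]

lemma lemA {n p : ℕ} (x : Fin n → R) (y : Fin p → R) (H : PowerSeries R)
    (hH : H * lin x = 1) (nu : Fin n → ℕ) :
    (Matrix.of fun k l : Fin n => zc (lin y * H) ((p + nu k : ℕ) - (k : ℕ) + (l : ℕ))).det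
     * (Matrix.of fun a k : Fin n => x a ^ (n - 1 - (k : ℕ))).det
     = (-1) ^ (∑ k, nu k) * (∏ a, ∏ b, (y b - x a))
       * (Matrix.of fun a k : Fin n => x a ^ (nu k + (n - 1 - (k : ℕ)))).det := by
  have h1 := lemA0 x y H hH nu
  have h0 := lemA0 x (fun i : Fin 0 => (0 : R)) H hH (fun _ => 0)
  have hH0 : PowerSeries.coeff 0 H = 1 := by
    have := congrArg (PowerSeries.coeff 0) hH
    rw [PowerSeries.coeff_mul] at this
    simpa [coeff_lin, es_zero] using this
  rw [det_unitri] at h0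
  · rw [one_mul] at h0
    rw [h0] at h1
    simp only [Finset.univ_eq_empty, Finset.prod_empty, Finset.prod_const_one, one_mul, zero_add] at h1
    rw [sign_det x (fun k => n - 1 - (k : ℕ)), sign_det x (fun k => nu k + (n - 1 - (k : ℕ)))] at h1
    simp only [pow_add, Finset.prod_mul_distrib] at h1
    rw [Finset.prod_pow_eq_pow_sum univ nu] at h1
    set s : R := ∏ k : Fin n, (-1) ^ (n - 1 - (k : ℕ)) with hs
    have hss : s * s = 1 := by
      rw [hs, ← Finset.prod_mul_distrib]
      apply Finset.prod_eq_one
      intro k _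
      rw [← mul_pow]; simp
    simp only [pow_add]
    linear_combination s * h1 + (- (Matrix.of fun k l : Fin n => zc (lin y * H) ((p + nu k : ℕ) - (k : ℕ) + (l : ℕ))).det
     * (Matrix.of fun a k : Fin n => x a ^ (n - 1 - (k : ℕ))).det + (-1) ^ (∑ k, nu k) * (∏ a, ∏ b, (y b - x a))
       * (Matrix.of fun a k : Fin n => x a ^ nu k * x a ^ (n - 1 - (k : ℕ))).det) * hss
  · intro i j hij
    have : (j : ℕ) < i := hij
    simp only [Matrix.of_apply]
    apply zc_neg
    push_cast; omega
  · intro i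
    have : (((0 + 0 : ℕ) : ℤ) - (i : ℕ) + (i : ℕ)) = ((0 : ℕ) : ℤ) := by omega
    simp only [Matrix.of_apply]
    rw [this, zc_nat]
    simp [lin, hH0]

lemma lemB {n p m : ℕ} (x : Fin n → R) (y : Fin p → R) (H : PowerSeries R)
    (hH : H * lin x = 1) (mu : ℕ → ℕ) (hmu : ∀ k, k < n → p ≤ mu k) :
    (Matrix.of fun k l : Fin (n + m) => zc (lin y * H) ((mu k : ℤ) - (k : ℕ) + (l : ℕ))).det
     = (Matrix.of fun k l : Fin n => zc (lin y * H) ((mu k : ℤ) - (k : ℕ) + (l : ℕ))).det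
      * (Matrix.of fun j i : Fin m => zc (lin y) ((mu (n + j) : ℤ) - (j : ℕ) + (i : ℕ))).det := by
  set U : Matrix (Fin (n + m)) (Fin (n + m)) R := Matrix.of fun l l' =>
    zc (lin x) ((l' : ℤ) - (l : ℕ)) with hU
  set U1 : Matrix (Fin n) (Fin n) R := Matrix.of fun l l' =>
    zc (lin x) ((l' : ℤ) - (l : ℕ)) with hU1
  set C := (Matrix.of fun k l : Fin (n + m) => zc (lin y * H) ((mu k : ℤ) - (k : ℕ) + (l : ℕ))) with hC
  set C1 := (Matrix.of fun k l : Fin n => zc (lin y * H) ((mu k : ℤ) - (k : ℕ) + (l : ℕ))) with hC1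
  have hUdet : U.det = 1 := by
    apply det_unitri
    · intro i j hij
      have : (j : ℕ) < i := hij
      simp only [hU, Matrix.of_apply]
      apply zc_neg; omega
    · intro i
      simp only [hU, Matrix.of_apply, sub_self]
      have := zc_nat (lin x) 0
      rw [coeff_lin, es_zero] at this
      exact this
  have hU1det : U1.det = 1 := by
    apply det_unitri
    · intro i j hij
      have : (j : ℕ) < i := hij
      simp only [hU1, Matrix.of_apply]
      apply zc_neg; omega
    · intro i
      simp only [hU1, Matrix.of_apply, sub_self]
      have := zc_nat (lin x) 0
      rw [coeff_lin, es_zero] at this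
      exact this
  have hf : lin y * H * lin x = lin y := by rw [mul_assoc, hH, mul_one]
  have hright : ∀ (k : Fin (n + m)) (i : Fin m), (C * U) k (Fin.natAdd n i)
      = zc (lin y) ((mu k : ℤ) - (k : ℕ) + (n + i : ℕ)) := by
    intro k i
    have hi := i.2
    rw [← hf, zc_mul _ _ (n + 1) (fun k hk => coeff_lin_zero x k hk), Matrix.mul_apply]
    simp only [hC, hU, Matrix.of_apply, Fin.val_natAdd]
    rw [Fin.sum_univ_eq_sum_range
      (fun l => zc (lin y * H) ((mu k : ℤ) - (k : ℕ) + (l : ℕ)) * zc (lin x) (((n + i : ℕ) : ℤ) - l))]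
    generalize (mu k : ℤ) - (k : ℕ) = D
    have e1 : n + m = (n + i + 1) + (m - 1 - i) := by omega
    rw [e1, Finset.sum_range_add, Finset.sum_eq_zero (s := range (m - 1 - i)), add_zero]
    · have e2 : n + (i : ℕ) + 1 = i + (n + 1) := by omega
      rw [e2, Finset.sum_range_add, Finset.sum_eq_zero (s := range (i : ℕ)), zero_add,
        ← Finset.sum_range_reflect]
      · apply Finset.sum_congr rfl
        intro j hj
        simp at hj
        rw [← zc_nat (lin x)]
        congr 2 <;> omega
      · intro l hl
        simp at hl
        have : ((n + i : ℕ) : ℤ) - l = ((n + i - l : ℕ) : ℤ) := by omega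
        rw [this, zc_nat, coeff_lin_zero, mul_zero]
        omega
    · intro l _
      rw [zc_neg (lin x) _ (by omega), mul_zero]
  have hblock : (C * U).submatrix finSumFinEquiv finSumFinEquiv
      = Matrix.fromBlocks (C1 * U1) 0
        (Matrix.of fun (j : Fin m) (l : Fin n) => (C * U) (Fin.natAdd n j) (Fin.castAdd m l))
        (Matrix.of fun j i : Fin m => zc (lin y) ((mu (n + j) : ℤ) - (j : ℕ) + (i : ℕ))) := by
    ext k l
    rcases k with k | k <;> rcases l with l | l
    · simp only [Matrix.submatrix_apply, finSumFinEquiv_apply_left, Matrix.fromBlocks_apply₁₁]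
      rw [Matrix.mul_apply, Matrix.mul_apply, Fin.sum_univ_add, Finset.sum_eq_zero (s := (univ : Finset (Fin m))), add_zero]
      · rfl
      · intro j _
        have := l.2
        simp only [hU, Matrix.of_apply]
        rw [zc_neg (lin x), mul_zero]
        simp; omega
    · have := k.2
      simp only [Matrix.submatrix_apply, finSumFinEquiv_apply_left, finSumFinEquiv_apply_right, Matrix.fromBlocks_apply₁₂]
      rw [hright]
      have h2 := hmu k k.2
      simp only [Fin.val_castAdd, Matrix.zero_apply]
      have : (mu k : ℤ) - (k : ℕ) + (n + l : ℕ) = ((mu k + n + l - k : ℕ) : ℤ) := by omega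
      rw [this, zc_nat, coeff_lin_zero]
      omega
    · simp
    · simp only [Matrix.submatrix_apply, finSumFinEquiv_apply_right, Matrix.fromBlocks_apply₂₂]
      rw [hright]
      simp only [Matrix.of_apply, Fin.val_natAdd]
      congr 1
      push_cast; ring
  calc C.det = (C * U).det := by rw [Matrix.det_mul, hUdet, mul_one]
    _ = ((C * U).submatrix finSumFinEquiv finSumFinEquiv).det :=
        (Matrix.det_submatrix_equiv_self _ _).symm
    _ = _ := by rw [hblock, Matrix.det_fromBlocks_zero₁₂, Matrix.det_mul, hU1det, mul_one]


lemma prod_ite_lt (m t : ℕ) (ht : t ≤ m) :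
    ∏ j : Fin m, (if (j : ℕ) < t then (-1 : ℤˣ) else 1) = (-1) ^ t := by
  rw [Fin.prod_univ_eq_prod_range (fun j => if j < t then (-1 : ℤˣ) else 1) m]
  obtain ⟨s, rfl⟩ := Nat.exists_eq_add_of_le ht
  rw [Finset.prod_range_add, Finset.prod_congr rfl (g := fun _ => (-1 : ℤˣ)),
    Finset.prod_eq_one (s := range s)]
  · simp
  · intro j _; simp
  · intro j hj; simp at hj; simp [hj]

/-- the shuffle -/
lemma exists_perm (p m : ℕ) (beta bc : ℕ → ℕ) (hbeta : Antitone beta)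
    (hconj : ∀ b j, b < bc j ↔ j < beta b) (hm : ∀ b, beta b ≤ m) (hp : ∀ j, bc j ≤ p) :
    ∃ τ : Equiv.Perm (Fin (p + m)),
      (∀ r : Fin p, (τ (Fin.castAdd m r) : ℕ) = beta (p - 1 - r) + r) ∧
      (∀ j : Fin m, (τ (Fin.natAdd p j) : ℕ) = p + j - bc j) ∧
      Equiv.Perm.sign τ = ∏ r : Fin p, (-1) ^ beta (p - 1 - r) := by
  have hbc : Antitone bc := by
    intro j j' hjj
    by_contra h
    push Not at h
    have h1 := (hconj (bc j) j').1 h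
    have h2 := (hconj (bc j) j).2 (by omega)
    omega
  set f : Fin (p + m) → Fin (p + m) := Fin.addCases (motive := fun _ => Fin (p + m))
    (fun r => ⟨beta (p - 1 - r) + r, by have := hm (p - 1 - r); have := r.2; omega⟩)
    (fun j => ⟨p + j - bc j, by have := j.2; omega⟩) with hf
  have f1 : ∀ r : Fin p, (f (Fin.castAdd m r) : ℕ) = beta (p - 1 - r) + r := by
    intro r; simp [hf]
  have f2 : ∀ j : Fin m, (f (Fin.natAdd p j) : ℕ) = p + j - bc j := by
    intro j; simp [hf]
  have o11 : ∀ r r' : Fin p, r < r' → f (Fin.castAdd m r) < f (Fin.castAdd m r') := by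
    intro r r' h
    rw [Fin.lt_def, f1, f1]
    have h' : (r : ℕ) < r' := h
    have := hbeta (show p - 1 - (r' : ℕ) ≤ p - 1 - r by omega)
    omega
  have o22 : ∀ r r' : Fin m, r < r' → f (Fin.natAdd p r) < f (Fin.natAdd p r') := by
    intro r r' h
    rw [Fin.lt_def, f2, f2]
    have h' : (r : ℕ) < r' := h
    have := hbc h'.le
    have := hp r
    omega
  have o12 : ∀ (r : Fin p) (j : Fin m), f (Fin.castAdd m r) ≠ f (Fin.natAdd p j) ∧
      (f (Fin.castAdd m r) < f (Fin.natAdd p j) ↔ ¬ (j : ℕ) < beta (p - 1 - r)) := by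
    intro r j
    rw [Fin.lt_def, Ne, Fin.ext_iff, f1, f2]
    have := hconj (p - 1 - r) j
    have := hp j
    have := r.2
    by_cases h : (j : ℕ) < beta (p - 1 - r)
    · have := (hconj (p - 1 - r) j).2 h
      omega
    · have : ¬ (p - 1 - (r : ℕ)) < bc j := fun h' => h ((hconj (p - 1 - r) j).1 h')
      omega
  have hinj : Function.Injective f := by
    intro u v
    induction u using Fin.addCases with
    | left u =>
      induction v using Fin.addCases with
      | left v =>
        intro h
        rcases lt_trichotomy u v with h1 | h1 | h1
        · exact absurd h (o11 _ _ h1).ne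
        · rw [h1]
        · exact absurd h (o11 _ _ h1).ne'
      | right v => intro h; exact absurd h (o12 _ _).1
    | right u =>
      induction v using Fin.addCases with
      | left v => intro h; exact absurd h.symm (o12 _ _).1
      | right v =>
        intro h
        rcases lt_trichotomy u v with h1 | h1 | h1
        · exact absurd h (o22 _ _ h1).ne
        · rw [h1]
        · exact absurd h (o22 _ _ h1).ne'
  refine ⟨Equiv.ofBijective f (Finite.injective_iff_bijective.1 hinj), f1, f2, ?_⟩
  rw [Equiv.Perm.sign_eq_prod_prod_Ioi]
  simp only [Equiv.ofBijective_apply]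
  have hI : ∀ i : Fin (p + m), ∏ j ∈ Finset.Ioi i, (if f i < f j then (1 : ℤˣ) else -1)
      = ∏ j, if i < j then (if f i < f j then (1 : ℤˣ) else -1) else 1 := by
    intro i
    rw [← Finset.prod_filter]
    congr 1
    ext j; simp
  simp only [hI]
  rw [Fin.prod_univ_add]
  simp only [Fin.prod_univ_add]
  rw [Finset.prod_eq_one (s := (univ : Finset (Fin m))), mul_one]
  · apply Finset.prod_congr rfl
    intro r _
    rw [Finset.prod_eq_one, one_mul, ← prod_ite_lt m _ (hm _)]
    · apply Finset.prod_congr rfl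
      intro j _
      rw [if_pos (by rw [Fin.lt_def]; simp; omega)]
      simp only [(o12 r j).2]
      split_ifs <;> simp_all
    · intro r' _
      split_ifs with h1 h2
      · rfl
      · exact absurd (o11 r r' h1) h2
      · rfl
  · intro j _
    rw [Finset.prod_eq_one, one_mul, Finset.prod_eq_one]
    · intro j' _
      split_ifs with h1 h2
      · rfl
      · exact absurd (o22 j j' (by simpa using h1)) h2
      · rfl
    · intro r _
      rw [if_neg]
      rw [Fin.lt_def]; simp; omega

lemma lemC {p m : ℕ} (y : Fin p → R) (beta bc : ℕ → ℕ) (hbeta : Antitone beta)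
    (hconj : ∀ b j, b < bc j ↔ j < beta b) (hm : ∀ b, beta b ≤ m) (hp : ∀ j, bc j ≤ p) :
    (Matrix.of fun j i : Fin m => zc (lin y) ((bc j : ℤ) - (j : ℕ) + (i : ℕ))).det
     * (Matrix.of fun a k : Fin p => y a ^ (p - 1 - (k : ℕ))).det
     = (Matrix.of fun a k : Fin p => y a ^ (beta k + (p - 1 - (k : ℕ)))).det := by
  obtain ⟨τ, t1, t2, ts⟩ := exists_perm p m beta bc hbeta hconj hm hp
  set D := (Matrix.of fun j i : Fin m => zc (lin y) ((bc j : ℤ) - (j : ℕ) + (i : ℕ))) with hD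
  set e : Fin p ⊕ Fin m ≃ Fin (p + m) := finSumFinEquiv with he
  set τ' : Equiv.Perm (Fin p ⊕ Fin m) := (e.trans τ).trans e.symm with hτ'
  have hs : Equiv.Perm.sign τ' = Equiv.Perm.sign τ := Equiv.Perm.sign_symm_trans_trans τ e.symm
  set V := (Matrix.of fun a r : Fin p => (- y a) ^ (r : ℕ)) with hV
  set A := (Matrix.of fun a r : Fin p => (- y a) ^ (beta (p - 1 - r) + r)) with hA
  let Zf : Fin p ⊕ Fin m → ℕ → R := Sum.elim (fun a q => (- y a) ^ q)
    (fun i q => if q = p + i then 1 else 0)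
  let Z0 : Matrix (Fin p ⊕ Fin m) (Fin p ⊕ Fin m) R := Matrix.of fun r s => Zf r (e s)
  let W : Matrix (Fin p ⊕ Fin m) (Fin p ⊕ Fin m) R := Matrix.of fun s =>
    Sum.elim (fun b => if s = Sum.inl b then 1 else 0)
      (fun i => zc (lin y) (((p + i : ℕ) : ℤ) - (τ (e s) : ℕ)))
  have hWdet : W.det = D.det := by
    have : W = Matrix.fromBlocks 1 (Matrix.of fun (r : Fin p) (i : Fin m) => W (Sum.inl r) (Sum.inr i)) 0 D := by
      ext s c
      rcases s with s | s <;> rcases c with c | c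
      · simp [W, Matrix.one_apply]
      · simp
      · simp [W]
      · simp only [W, Matrix.of_apply, Sum.elim_inr, Matrix.fromBlocks_apply₂₂, hD, he,
          finSumFinEquiv_apply_right, t2]
        have := hp s
        congr 1
        omega
    rw [this, Matrix.det_fromBlocks_zero₂₁, Matrix.det_one, one_mul]
  have hZdet : Z0.det = V.det := by
    have : Z0 = Matrix.fromBlocks V (Matrix.of fun (r : Fin p) (i : Fin m) => Z0 (Sum.inl r) (Sum.inr i)) 0 1 := by
      ext s c
      rcases s with s | s <;> rcases c with c | c
      · simp [Z0, Zf, hV, he]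
      · simp
      · simp [Z0, Zf, he]
        intro h
        have := c.2
        omega
      · simp [Z0, Zf, he, Matrix.one_apply, Fin.ext_iff, eq_comm]
    rw [this, Matrix.det_fromBlocks_zero₂₁, Matrix.det_one, mul_one]
  set Z := Z0.submatrix id τ' with hZ
  have hZa : ∀ r s, Z r s = Zf r (τ (e s)) := by
    intro r s; simp [hZ, Z0, hτ']
  have hprod : Z * W = Matrix.fromBlocks A 0
      (Matrix.of fun (i : Fin m) (b : Fin p) => (Z * W) (Sum.inr i) (Sum.inl b))
      (Matrix.of fun i' i : Fin m => zc (lin y) (((i : ℕ) : ℤ) - (i' : ℕ))) := by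
    ext s c
    rcases s with s | s <;> rcases c with c | c
    · rw [Matrix.mul_apply]
      simp only [hZa, W, Matrix.of_apply, Sum.elim_inl, mul_ite, mul_one, mul_zero,
        Finset.sum_ite_eq', Finset.sum_ite_eq, Finset.mem_univ, if_true, Matrix.fromBlocks_apply₁₁]
      simp [Zf, hA, he, t1]
    · rw [Matrix.mul_apply]
      simp only [hZa, W, Matrix.of_apply, Sum.elim_inr, Matrix.fromBlocks_apply₁₂,
        Matrix.zero_apply]
      refine (Equiv.sum_comp (e.trans τ)
        (fun q : Fin (p + m) => Zf (Sum.inl s) q * zc (lin y) (((p + c : ℕ) : ℤ) - (q : ℕ)))).trans ?_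
      rw [Fin.sum_univ_eq_sum_range
        (fun q => Zf (Sum.inl s) q * zc (lin y) (((p + c : ℕ) : ℤ) - q))]
      have hc := c.2
      have e1 : p + m = c + (p + 1) + (m - 1 - c) := by omega
      rw [e1, Finset.sum_range_add, Finset.sum_eq_zero (s := range (m - 1 - c)), add_zero,
        Finset.sum_range_add, Finset.sum_eq_zero (s := range (c : ℕ)), zero_add,
        ← Finset.sum_range_reflect]
      · have h0 : (-y s) ^ (c : ℕ) * ∑ j ∈ range (p + 1), (-y s) ^ (p - j) * es y j = 0 := by
          rw [eval_prod, Finset.prod_eq_zero (Finset.mem_univ s) (by simp), mul_zero]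
        rw [← h0, Finset.mul_sum]
        apply Finset.sum_congr rfl
        intro j hj
        simp at hj
        have : ((p + c : ℕ) : ℤ) - ((c + (p + 1 - 1 - j) : ℕ) : ℤ) = (j : ℕ) := by omega
        rw [this, zc_nat, coeff_lin]
        simp only [Zf, Sum.elim_inl, pow_add, Nat.add_sub_cancel, mul_assoc]
      · intro q hq
        simp at hq
        have : ((p + c : ℕ) : ℤ) - q = ((p + c - q : ℕ) : ℤ) := by omega
        rw [this, zc_nat, coeff_lin_zero, mul_zero]
        omega
      · intro q hq
        rw [zc_neg, mul_zero]
        omega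
    · simp
    · rw [Matrix.mul_apply]
      simp only [hZa, W, Matrix.of_apply, Sum.elim_inr, Matrix.fromBlocks_apply₂₂]
      refine (Equiv.sum_comp (e.trans τ)
        (fun q : Fin (p + m) => Zf (Sum.inr s) q * zc (lin y) (((p + c : ℕ) : ℤ) - (q : ℕ)))).trans ?_
      rw [Finset.sum_eq_single (Fin.natAdd p s)]
      · simp [Zf]
      · intro b _ hb
        have : ¬ (b : ℕ) = p + s := fun h => hb (Fin.ext (by simpa using h))
        simp [Zf, this]
      · simp
  have hU : (Matrix.of fun i' i : Fin m => zc (lin y) (((i : ℕ) : ℤ) - (i' : ℕ))).det = 1 := by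
    apply det_unitri
    · intro i j hij
      have : (j : ℕ) < i := hij
      simp only [Matrix.of_apply]
      apply zc_neg; omega
    · intro i
      simp only [Matrix.of_apply, sub_self]
      have := zc_nat (lin y) 0
      rw [coeff_lin, es_zero] at this
      exact this
  have main : ((Equiv.Perm.sign τ' : ℤ) : R) * V.det * D.det = A.det := by
    have := congrArg Matrix.det hprod
    rw [Matrix.det_fromBlocks_zero₁₂, hU, mul_one, Matrix.det_mul, hZ, Matrix.det_permute', hZdet,
      hWdet] at this
    exact this
  rw [hs, ts] at main
  have hV' := sign_det y (fun r => (r : ℕ))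
  have hA' := sign_det y (fun r => beta (p - 1 - r) + (r : ℕ))
  rw [← Matrix.det_transpose] at hV' hA'
  change V.det = _ at hV'
  change A.det = _ at hA'
  rw [hV', hA'] at main
  simp only [pow_add, Finset.prod_mul_distrib] at main
  push_cast at main
  have rV := Matrix.det_permute' Fin.revPerm (Matrix.of fun a k : Fin p => y a ^ (k : ℕ))
  have rA := Matrix.det_permute' Fin.revPerm
    (Matrix.of fun a k : Fin p => y a ^ (beta (p - 1 - k)) * y a ^ (k : ℕ))
  have eV : (Matrix.of fun a k : Fin p => y a ^ (k : ℕ)).submatrix id Fin.revPerm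
      = Matrix.of fun a k : Fin p => y a ^ (p - 1 - (k : ℕ)) := by
    ext a k
    simp only [Matrix.submatrix_apply, Matrix.of_apply, Fin.revPerm_apply, Fin.val_rev, id]
    congr 1
    omega
  have eA : (Matrix.of fun a k : Fin p => y a ^ (beta (p - 1 - k)) * y a ^ (k : ℕ)).submatrix id Fin.revPerm
      = Matrix.of fun a k : Fin p => y a ^ (beta k + (p - 1 - (k : ℕ))) := by
    ext a k
    have := k.2
    simp only [Matrix.submatrix_apply, Matrix.of_apply, Fin.revPerm_apply, Fin.val_rev, id]
    rw [← pow_add]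
    congr 1
    rw [show p - 1 - (p - ((k : ℕ) + 1)) = k by omega]
    omega
  rw [eV] at rV
  rw [eA] at rA
  rw [rV, rA]
  set S : R := ∏ r : Fin p, (-1) ^ beta (p - 1 - r) with hS
  set T : R := ∏ r : Fin p, (-1) ^ (r : ℕ) with hT
  have hSS : S * S = 1 := by
    rw [hS, ← Finset.prod_mul_distrib]
    apply Finset.prod_eq_one
    intro k _
    rw [← mul_pow]; simp
  have hTT : T * T = 1 := by
    rw [hT, ← Finset.prod_mul_distrib]
    apply Finset.prod_eq_one
    intro k _
    rw [← mul_pow]; simp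
  have main2 : (Matrix.of fun a k : Fin p => y a ^ (k : ℕ)).det * D.det
     = (Matrix.of fun a k : Fin p => y a ^ (beta (p - 1 - k)) * y a ^ (k : ℕ)).det := by
    have h3 : (S * S) * (T * T) * ((Matrix.of fun a k : Fin p => y a ^ (k : ℕ)).det * D.det)
     = (S * S) * (T * T) * (Matrix.of fun a k : Fin p => y a ^ (beta (p - 1 - k)) * y a ^ (k : ℕ)).det := by
      linear_combination S * T * main
    simpa [hSS, hTT] using h3
  linear_combination ((Equiv.Perm.sign (Fin.revPerm : Equiv.Perm (Fin p)) : ℤ) : R) * main2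


lemma conj_iff (lam : ℕ → ℕ) (h : Antitone lam) (K : ℕ) (hK : ∀ k, K ≤ k → lam k = 0) (m k : ℕ) :
    k < conjP lam m ↔ m + 1 ≤ lam k := by
  have hex : ∃ t, lam t < m + 1 := ⟨K, by rw [hK K le_rfl]; omega⟩
  classical
  set t := Nat.find hex with ht
  have hiff : ∀ k, m + 1 ≤ lam k ↔ k < t := by
    intro k
    constructor
    · intro hk
      by_contra hkt
      have h1 := h (not_lt.1 hkt)
      have h2 := Nat.find_spec hex
      rw [← ht] at h2
      omega
    · intro hk
      have := Nat.find_min hex hk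
      omega
  have hc : conjP lam m = t := by
    unfold conjP
    simp only [hiff]
    have : Nat.card {k : ℕ // k < t} = Nat.card (Fin t) := Nat.card_congr Fin.equivSubtype.symm
    rw [this, Nat.card_fin]
  rw [hc, hiff]

lemma hsym_series (n p : ℕ) :
    (PowerSeries.mk fun a => (-1) ^ a * hsymX n p a)
      = ∏ k : Fin n, geo (-(X (Sum.inl k) : MvPolynomial (Fin n ⊕ Fin p) ℤ)) := by
  ext1 d
  rw [PowerSeries.coeff_mk, PowerSeries.coeff_prod, hsymX, Finset.mul_sum]
  symm
  refine Finset.sum_bij' (fun (f : Fin n →₀ ℕ) _ => (f : Fin n → ℕ))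
    (fun f _ => Finsupp.equivFunOnFinite.symm f) ?_ ?_ ?_ ?_ ?_
  · intro f hf
    rw [Finset.mem_finsuppAntidiag] at hf
    exact Finset.Nat.mem_antidiagonalTuple.2 hf.1
  · intro f hf
    rw [Finset.mem_finsuppAntidiag]
    exact ⟨by simpa using Finset.Nat.mem_antidiagonalTuple.1 hf, Finset.subset_univ _⟩
  · intro f _; ext; simp
  · intro f _; ext; simp
  · intro f hf
    rw [Finset.mem_finsuppAntidiag] at hf
    simp only [geo, PowerSeries.coeff_mk]
    rw [← hf.1, ← Finset.prod_pow_eq_pow_sum, ← Finset.prod_mul_distrib]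
    apply Finset.prod_congr rfl
    intro k _
    rw [neg_pow]

lemma hsym_mul (n p : ℕ) :
    (PowerSeries.mk fun a => (-1) ^ a * hsymX n p a)
      * lin (fun k : Fin n => (X (Sum.inl k) : MvPolynomial (Fin n ⊕ Fin p) ℤ)) = 1 := by
  rw [hsym_series, lin, ← Finset.prod_mul_distrib]
  exact Finset.prod_eq_one fun k _ => geo_mul _

lemma cInt_eq (n p : ℕ) (d : ℤ) :
    cInt n p d = zc (lin (fun k : Fin p => (X (Sum.inr k) : MvPolynomial (Fin n ⊕ Fin p) ℤ))
      * (PowerSeries.mk fun a => (-1) ^ a * hsymX n p a)) d := by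
  unfold cInt zc
  split_ifs with h
  · rw [mul_comm (lin _), PowerSeries.coeff_mul, Finset.Nat.sum_antidiagonal_eq_sum_range_succ
        (fun i j => PowerSeries.coeff i _ * PowerSeries.coeff j _), cpoly]
    apply Finset.sum_congr rfl
    intro a _
    rw [PowerSeries.coeff_mk, coeff_lin]
    rfl
  · rfl

lemma superSchur_eq (n p : ℕ) (lam : ℕ → ℕ) (M : ℕ) (h : lam 0 = M) :
    superSchur n p lam = (Matrix.of fun k l : Fin M =>
      cInt n p ((conjP lam (k : ℕ) : ℤ) - (k : ℕ) + (l : ℕ))).det := by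
  subst h; rfl

lemma vdm {n : ℕ} (x : Fin n → R) :
    (Matrix.of fun a k : Fin n => x a ^ (n - 1 - (k : ℕ))).det
     = ∏ q ∈ Finset.univ.filter (fun q : Fin n × Fin n => q.1 < q.2), (x q.1 - x q.2) := by
  have h := Matrix.det_projVandermonde (fun _ => (1 : R)) x
  have h2 : Matrix.projVandermonde (fun _ => (1 : R)) x
      = Matrix.of fun a k : Fin n => x a ^ (n - 1 - (k : ℕ)) := by
    ext a k
    rw [Matrix.projVandermonde_apply, Matrix.of_apply, one_pow, one_mul, Fin.val_rev]
    congr 1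
    omega
  rw [← h2, h, Finset.prod_filter, ← Finset.univ_product_univ, Finset.prod_product]
  apply Finset.prod_congr rfl
  intro i _
  rw [← Finset.prod_filter]
  apply Finset.prod_congr
  · ext j; simp
  · intro j _; simp

lemma sum_conj (n : ℕ) (alpha : ℕ → ℕ) (h : Antitone alpha) (N : ℕ)
    (hN : ∀ k, N ≤ k → alpha k = 0) (h0 : alpha 0 ≤ n) :
    ∑ k : Fin n, conjP alpha k = ∑ l ∈ range N, alpha l := by
  rw [Fin.sum_univ_eq_sum_range (fun k => conjP alpha k)]
  have h1 : ∀ k, conjP alpha k = #{l ∈ range N | k < alpha l} := by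
    intro k
    have : {l ∈ range N | k < alpha l} = range (conjP alpha k) := by
      ext l
      simp only [Finset.mem_filter, Finset.mem_range, conj_iff alpha h N hN]
      constructor
      · intro hh; omega
      · intro hh
        refine ⟨?_, by omega⟩
        by_contra hl
        rw [hN l (by omega)] at hh
        omega
    rw [this, Finset.card_range]
  have h2 : ∀ l, alpha l = #{k ∈ range n | k < alpha l} := by
    intro l
    have : {k ∈ range n | k < alpha l} = range (alpha l) := by
      ext k
      have := h (Nat.zero_le l)
      simp; omega
    rw [this, Finset.card_range]
  rw [Finset.sum_congr rfl (fun k _ => h1 k), Finset.sum_congr rfl (fun l _ => h2 l)]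
  simp only [Finset.card_filter]
  exact Finset.sum_comm

lemma vdm_ne_zero {n : ℕ} {σ : Type*} (g : Fin n → σ) (hg : Function.Injective g) :
    (∏ q ∈ Finset.univ.filter (fun q : Fin n × Fin n => q.1 < q.2),
      (X (g q.1) - X (g q.2) : MvPolynomial σ ℤ)) ≠ 0 := by
  rw [Finset.prod_ne_zero_iff]
  intro q hq
  rw [Finset.mem_filter] at hq
  rw [sub_ne_zero]
  intro h
  exact hq.2.ne (hg (X_injective h))

lemma rename_bialt {n : ℕ} {σ : Type*} (g : Fin n → σ) (s : MvPolynomial (Fin n) ℤ) (e : Fin n → ℕ)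
    (h : s * ∏ q ∈ Finset.univ.filter (fun q : Fin n × Fin n => q.1 < q.2),
          (X q.1 - X q.2)
        = (Matrix.of fun a b : Fin n => (X a : MvPolynomial (Fin n) ℤ) ^ e b).det) :
    rename g s * ∏ q ∈ Finset.univ.filter (fun q : Fin n × Fin n => q.1 < q.2),
          (X (g q.1) - X (g q.2))
        = (Matrix.of fun a b : Fin n => (X (g a) : MvPolynomial σ ℤ) ^ e b).det := by
  have := congrArg (rename g) h
  rw [map_mul, map_prod, AlgHom.map_det] at this
  simp only [map_sub, rename_X] at this
  rw [this]
  congr 1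
  ext1 a b
  simp

end FF

theorem factorization_formula (n p : ℕ) (hn : 1 ≤ n) (hp : 1 ≤ p)
    (alpha beta : ℕ → ℕ)
    (halpha : Antitone alpha) (hbeta : Antitone beta)
    (halpha1 : alpha 0 ≤ n) (hbetalen : ∀ k, p ≤ k → beta k = 0)
    (N : ℕ) (halphaN : ∀ k, N ≤ k → alpha k = 0)
    (Sx : (ℕ → ℕ) → MvPolynomial (Fin n) ℤ)
    (Sy : (ℕ → ℕ) → MvPolynomial (Fin p) ℤ)
    -- bialternant characterization of the Schur polynomials in the x-variables:
    (hSx : ∀ nu : ℕ → ℕ, Antitone nu → (∀ k, n ≤ k → nu k = 0) →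
      Sx nu * ∏ q ∈ Finset.univ.filter (fun q : Fin n × Fin n => q.1 < q.2),
          (X q.1 - X q.2)
        = (Matrix.of fun a b : Fin n =>
            (X a : MvPolynomial (Fin n) ℤ) ^ (nu (b : ℕ) + (n - 1 - (b : ℕ)))).det)
    -- bialternant characterization of the Schur polynomials in the y-variables:
    (hSy : ∀ nu : ℕ → ℕ, Antitone nu → (∀ k, p ≤ k → nu k = 0) →
      Sy nu * ∏ q ∈ Finset.univ.filter (fun q : Fin p × Fin p => q.1 < q.2),
          (X q.1 - X q.2)
        = (Matrix.of fun a b : Fin p =>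
            (X a : MvPolynomial (Fin p) ℤ) ^ (nu (b : ℕ) + (p - 1 - (b : ℕ)))).det) :
    superSchur n p (fun l => if l < p then n + beta l else alpha (l - p))
      = (-1 : MvPolynomial (Fin n ⊕ Fin p) ℤ) ^ (∑ l ∈ Finset.range N, alpha l)
        * (∏ a : Fin n, ∏ b : Fin p, (X (Sum.inr b) - X (Sum.inl a)))
        * rename Sum.inl (Sx (conjP alpha))
        * rename Sum.inr (Sy beta) := by
  classical
  set lam : ℕ → ℕ := fun l => if l < p then n + beta l else alpha (l - p) with hlam
  have hA : ∀ k l, l < conjP alpha k ↔ k + 1 ≤ alpha l :=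
    fun k l => FF.conj_iff alpha halpha N halphaN k l
  have hB : ∀ k l, l < conjP beta k ↔ k + 1 ≤ beta l :=
    fun k l => FF.conj_iff beta hbeta p hbetalen k l
  have hlamA : Antitone lam := by
    intro i j hij
    simp only [hlam]
    have h1 := hbeta hij
    have h2 := halpha (show i - p ≤ j - p by omega)
    have h3 := halpha (Nat.zero_le (j - p))
    split_ifs <;> omega
  have hlamN : ∀ k, p + N ≤ k → lam k = 0 := by
    intro k hk
    simp only [hlam]
    rw [if_neg (by omega)]
    exact halphaN _ (by omega)
  have hL : ∀ k l, l < conjP lam k ↔ k + 1 ≤ lam l :=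
    fun k l => FF.conj_iff lam hlamA (p + N) hlamN k l
  have hc1 : ∀ k, k < n → conjP lam k = p + conjP alpha k := by
    intro k hk
    apply eq_of_forall_lt_iff
    intro l
    rw [hL]
    simp only [hlam]
    split_ifs with h
    · omega
    · have := hA k (l - p)
      omega
  have hc2 : ∀ j, conjP lam (n + j) = conjP beta j := by
    intro j
    apply eq_of_forall_lt_iff
    intro l
    rw [hL, hB]
    simp only [hlam]
    split_ifs with h
    · omega
    · have := halpha (Nat.zero_le (l - p))
      have := hbetalen l (by omega)
      omega
  have hAanti : Antitone (conjP alpha) := by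
    intro k k' hk
    by_contra hh
    push Not at hh
    have h1 := (hA k' _).1 hh
    have h2 := (hA k (conjP alpha k)).2 (by omega)
    omega
  have hAzero : ∀ k, n ≤ k → conjP alpha k = 0 := by
    intro k hk
    by_contra hh
    have := (hA k 0).1 (by omega)
    omega
  have hSx' := FF.rename_bialt (Sum.inl : Fin n → Fin n ⊕ Fin p) _ _ (hSx (conjP alpha) hAanti hAzero)
  have hSy' := FF.rename_bialt (Sum.inr : Fin p → Fin n ⊕ Fin p) _ _ (hSy beta hbeta hbetalen)
  have hVx := FF.vdm_ne_zero (Sum.inl : Fin n → Fin n ⊕ Fin p) Sum.inl_injective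
  have hVy := FF.vdm_ne_zero (Sum.inr : Fin p → Fin n ⊕ Fin p) Sum.inr_injective
  rw [FF.superSchur_eq n p lam (n + beta 0) (by simp only [hlam]; rw [if_pos (by omega)])]
  simp only [FF.cInt_eq]
  rw [FF.lemB _ _ _ (FF.hsym_mul n p) (conjP lam) (fun k hk => by rw [hc1 k hk]; omega)]
  have h1 := FF.lemA _ (fun k : Fin p => (X (Sum.inr k) : MvPolynomial (Fin n ⊕ Fin p) ℤ)) _
    (FF.hsym_mul n p) (fun k => conjP alpha k)
  have h2 := FF.lemC (m := beta 0) (fun k : Fin p => (X (Sum.inr k) : MvPolynomial (Fin n ⊕ Fin p) ℤ))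
    beta (conjP beta) hbeta (fun b j => by rw [hB]; omega) (fun b => hbeta (Nat.zero_le b))
    (fun j => by
      by_contra hh
      have h3 := (hB j p).1 (by omega)
      rw [hbetalen p le_rfl] at h3
      omega)
  rw [FF.vdm, ← hSx', FF.sum_conj n alpha halpha N halphaN halpha1] at h1
  rw [FF.vdm, ← hSy'] at h2
  have e1 : ∀ k : Fin n, conjP lam k = p + conjP alpha k := fun k => hc1 k k.2
  simp only [e1, hc2]
  apply mul_right_cancel₀ hVx
  apply mul_right_cancel₀ hVy
  have h3 := mul_right_cancel₀ hVy h2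
  rw [h3]
  linear_combination (rename Sum.inr (Sy beta)) * (∏ q ∈ Finset.univ.filter (fun q : Fin p × Fin p => q.1 < q.2),
      (X (Sum.inr q.1) - X (Sum.inr q.2) : MvPolynomial (Fin n ⊕ Fin p) ℤ)) * h1
end
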